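/- arXiv:1607.06051 — 2 statements merged into one kernel-verified Lean document; each statement's English description precedes it below -/
import Mathlib

section
/- Fix n ≥ 2 and let μ, μ′ ∈ ℝⁿ satisfy Σᵢ μᵢ = Σᵢ μ′ᵢ = 0. If P_μ(σ) = P_{μ′}(σ) for every permutation σ of {1,…,n}, then μ = μ′. (Identifiability of the Thurstone–Mosteller–Daniels model on the mean-zero parameter space.) -/
open MeasureTheory ProbabilityTheory

/-- The product measure `γ_μ` on `ℝⁿ` whose `i`-th coordinate distribution is the real
Gaussian `N(μᵢ, 1)`. -/
noncomputable def gaussProd {n : ℕ} (μ : Fin n → ℝ) : Measure (Fin n → ℝ) :=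
  Measure.pi fun i => gaussianReal (μ i) 1

/-- `P_μ(σ) = γ_μ({z : z_{σ(1)} > z_{σ(2)} > ⋯ > z_{σ(n)}})`, the probability that ranking the
coordinates of `z` in decreasing order yields the permutation `σ`. -/
noncomputable def rankProb {n : ℕ} (μ : Fin n → ℝ) (σ : Equiv.Perm (Fin n)) : ℝ :=
  (gaussProd μ {z | ∀ i j : Fin n, i < j → z (σ j) < z (σ i)}).toReal

instance {n : ℕ} (μ : Fin n → ℝ) : IsProbabilityMeasure (gaussProd μ) := by
  unfold gaussProd
  infer_instance

/-- The difference of two distinct coordinates under `γ_μ` is Gaussian with variance `2`. -/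
lemma gaussProd_map_sub {n : ℕ} (μ : Fin n → ℝ) {i j : Fin n} (hij : i ≠ j) :
    (gaussProd μ).map (fun z => z j - z i) = gaussianReal (μ j - μ i) 2 := by
  have hlaw (k : Fin n) : (gaussProd μ).map (fun z => z k) = gaussianReal (μ k) 1 :=
    (measurePreserving_eval (fun i => gaussianReal (μ i) 1) k).map_eq
  have hneg : (gaussProd μ).map (fun z => -z i) = gaussianReal (-μ i) 1 := by
    rw [← gaussianReal_map_neg, ← hlaw i, Measure.map_map (by fun_prop) (by fun_prop)]
    rfl
  have hind : iIndepFun (fun k (z : Fin n → ℝ) => z k) (gaussProd μ) :=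
    iIndepFun_pi (X := fun _ => id) fun _ => aemeasurable_id
  have hind' : IndepFun (fun z : Fin n → ℝ => z j) (fun z => -z i) (gaussProd μ) :=
    (hind.indepFun hij.symm).comp measurable_id measurable_neg
  have hsum := gaussianReal_add_gaussianReal_of_indepFun hind' (hlaw j) hneg
  rw [one_add_one_eq_two, ← sub_eq_add_neg (μ j)] at hsum
  simpa only [Pi.add_def, ← sub_eq_add_neg] using hsum

/-- Almost surely, the coordinates are pairwise distinct. -/
lemma ae_injective_gaussProd {n : ℕ} (μ : Fin n → ℝ) :
    ∀ᵐ z ∂gaussProd μ, Function.Injective z := by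
  have hne (i j : Fin n) : ∀ᵐ z ∂gaussProd μ, i ≠ j → z j - z i ≠ 0 := by
    by_cases hij : i = j
    · simp [hij]
    have h0 : ∀ᵐ x ∂(gaussProd μ).map (fun z => z j - z i), x ≠ 0 := by
      rw [gaussProd_map_sub μ hij]
      exact (gaussianReal_absolutelyContinuous _ two_ne_zero).ae_le (Measure.ae_ne volume 0)
    filter_upwards [ae_of_ae_map (by fun_prop) h0] with z hz _ using hz
  filter_upwards [ae_all_iff.2 fun i => ae_all_iff.2 (hne i)] with z hz i j hzij
  by_contra hij
  exact hz i j hij (sub_eq_zero.2 hzij.symm)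

/-- The probability that coordinate `i` beats coordinate `j` is the sum of the probabilities of
the rankings that place `i` before `j`. -/
lemma measureReal_lt_eq_sum_rankProb {n : ℕ} (μ : Fin n → ℝ) (i j : Fin n) :
    (gaussProd μ).real {z | z j < z i} =
      ∑ σ : Equiv.Perm (Fin n) with σ.symm i < σ.symm j, rankProb μ σ := by
  unfold rankProb
  simp only [← measureReal_def]
  rw [← measureReal_biUnion_finset]
  · refine measureReal_congr (Filter.eventuallyEq_set.2 ?_)
    filter_upwards [ae_injective_gaussProd μ] with z hz
    simp only [Set.mem_iUnion, Set.mem_ofPred_eq, Finset.mem_filter, Finset.mem_univ, true_and,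
      exists_prop]
    constructor
    · intro hji
      set σ := Tuple.sort fun k => -z k
      have hmono : StrictMono ((fun k => -z k) ∘ σ) :=
        (Tuple.monotone_sort _).strictMono_of_injective
          ((neg_injective.comp hz).comp σ.injective)
      refine ⟨σ, ?_, fun a b hab => neg_lt_neg_iff.1 (hmono hab)⟩
      rw [← hmono.lt_iff_lt]
      simpa using hji
    · rintro ⟨σ, hσ, hz⟩
      simpa using hz _ _ hσ
  · intro σ _ τ _ hne
    refine Set.disjoint_left.2 fun z hσ hτ => hne ?_
    have hσ' : StrictMono ((fun k => -z k) ∘ σ) := fun a b hab => neg_lt_neg (hσ a b hab)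
    have hτ' : StrictMono ((fun k => -z k) ∘ τ) := fun a b hab => neg_lt_neg (hτ a b hab)
    have hinj : Function.Injective fun k => -z k :=
      (Function.Injective.of_comp_iff' _ σ.bijective).1 hσ'.injective
    exact Equiv.ext fun k =>
      hinj (congrFun (Tuple.unique_monotone hσ'.monotone hτ'.monotone) k)
  · intro σ _
    simp only [Set.ofPred_forall]
    exact .iInter fun a => .iInter fun b => .iInter fun _ =>
      measurableSet_lt (by fun_prop) (by fun_prop)

/-- The mass that a nondegenerate Gaussian gives to the negative half-line is strictly
decreasing in the mean. -/
lemma strictAnti_gaussianReal_Iio_zero {v : NNReal} (hv : v ≠ 0) :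
    StrictAnti fun m => (gaussianReal m v).real (Set.Iio 0) := by
  have hshift (m : ℝ) :
      (gaussianReal m v).real (Set.Iio 0) = (gaussianReal 0 v).real (Set.Iio (-m)) := by
    have hmap := gaussianReal_map_add_const (μ := 0) (v := v) m
    rw [zero_add] at hmap
    rw [← hmap, map_measureReal_apply (by fun_prop) measurableSet_Iio]
    congr 1
    ext x
    simp [lt_neg_iff_add_neg]
  intro a b hab
  have hpos : 0 < (gaussianReal 0 v).real (Set.Ico (-b) (-a)) := by
    have := (gaussianReal_absolutelyContinuous' 0 hv).isOpenPosMeasure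
    refine (measureReal_nonneg.lt_of_ne' ?_).trans_le (measureReal_mono Set.Ioo_subset_Ico_self)
    rw [measureReal_ne_zero_iff]
    exact (isOpen_Ioo.measure_pos _ (Set.nonempty_Ioo.2 (neg_lt_neg hab))).ne'
  have hunion : Set.Iio (-a) = Set.Iio (-b) ∪ Set.Ico (-b) (-a) :=
    (Set.Iio_union_Ico_eq_Iio (neg_lt_neg hab).le).symm
  have hdisj : Disjoint (Set.Iio (-b)) (Set.Ico (-b) (-a)) :=
    Set.disjoint_left.2 fun x hx hx' => hx'.1.not_gt hx
  simp only [hshift]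
  rw [hunion, measureReal_union hdisj measurableSet_Ico]
  linarith

/-- Fix `n ≥ 2` and mean-zero vectors `μ, μ′ ∈ ℝⁿ`. If `P_μ(σ) = P_{μ′}(σ)`
for every permutation `σ`, then `μ = μ′`: identifiability of the Thurstone–Mosteller–Daniels
model on the mean-zero parameter space. -/
theorem rankProb_identifiable (n : ℕ) (hn : 2 ≤ n) (μ μ' : Fin n → ℝ)
    (hμ : ∑ i, μ i = 0) (hμ' : ∑ i, μ' i = 0)
    (h : ∀ σ : Equiv.Perm (Fin n), rankProb μ σ = rankProb μ' σ) :
    μ = μ' := by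
  have hdiff (i j : Fin n) : μ j - μ i = μ' j - μ' i := by
    by_cases hij : i = j
    · simp [hij]
    have hpair (ν : Fin n → ℝ) :
        (gaussianReal (ν j - ν i) 2).real (Set.Iio 0) =
          (gaussProd ν).real {z | z j < z i} := by
      rw [← gaussProd_map_sub ν hij, map_measureReal_apply (by fun_prop) measurableSet_Iio]
      congr 1
      ext z
      simp
    refine (strictAnti_gaussianReal_Iio_zero two_ne_zero).injective ?_
    simp only [hpair, measureReal_lt_eq_sum_rankProb, h]
  ext i
  have hsum := Finset.sum_congr rfl fun j (_ : j ∈ Finset.univ) => hdiff i j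
  simp only [Finset.sum_sub_distrib, hμ, hμ', Finset.sum_const, Finset.card_univ,
    Fintype.card_fin, nsmul_eq_mul, zero_sub, neg_inj] at hsum
  exact mul_left_cancel₀ (Nat.cast_ne_zero.2 (by omega)) hsum
end

section
/- Let N ≥ 1 be an integer and let π : ℝᴺ → [0,∞) be a probability density with respect to Lebesgue measure such that for almost every z ∈ ℝᴺ, the normalizing constant c(z) = ∫₀^∞ π(z/θ) θ^{−N−1} dθ satisfies 0 < c(z) < ∞. Then the Markov transition that, from state z, draws θ ∈ (0,∞) with density θ ↦ π(z/θ) θ^{−N−1} / c(z) and moves to z/θ leaves π invariant: for every Lebesgue-measurable set A ⊆ ℝᴺ, ∫_{ℝᴺ} π(z) · (1/c(z)) · ∫₀^∞ 1_A(z/θ) π(z/θ) θ^{−N−1} dθ dz = ∫_A π(y) dy. (Validity of the parameter-expanded data-augmentation scale-group move.) -/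
open MeasureTheory
open scoped ENNReal

/-- The normalizing constant `c(z) = ∫₀^∞ p(z/θ) θ^{−N−1} dθ` of the PX-DA scale move,
where `z/θ` is coordinatewise division and `p` plays the role of the target density `π`. -/
noncomputable def pxdaConst (N : ℕ) (p : (Fin N → ℝ) → ℝ) (z : Fin N → ℝ) : ℝ≥0∞ :=
  ∫⁻ θ in Set.Ioi (0 : ℝ),
    ENNReal.ofReal (p (fun i => z i / θ) * θ ^ (-(N : ℝ) - 1))

theorem lintegral_Ioi_eq_mul_left {a : ℝ} (ha : 0 < a) (f : ℝ → ℝ≥0∞) :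
    ∫⁻ s in Set.Ioi (0 : ℝ), f s = ENNReal.ofReal a * ∫⁻ t in Set.Ioi (0 : ℝ), f (a * t) := by
  have himage : (fun t => a * t) '' Set.Ioi (0 : ℝ) = Set.Ioi 0 := by
    rw [Set.image_mul_left_Ioi ha, mul_zero]
  have h := lintegral_image_eq_lintegral_abs_deriv_mul (s := Set.Ioi (0 : ℝ))
    (f := fun t => a * t) (f' := fun _ => a) measurableSet_Ioi
    (fun t _ => by simpa using ((hasDerivAt_id t).const_mul a).hasDerivWithinAt)
    (mul_right_injective₀ ha.ne').injOn f
  rw [himage] at h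
  rw [h, abs_of_pos ha, lintegral_const_mul' _ _ ENNReal.ofReal_ne_top]

theorem lintegral_Ioi_eq_inv (f : ℝ → ℝ≥0∞) :
    ∫⁻ s in Set.Ioi (0 : ℝ), f s =
      ∫⁻ t in Set.Ioi (0 : ℝ), ENNReal.ofReal (t ^ 2)⁻¹ * f t⁻¹ := by
  have himage : (fun t : ℝ => t⁻¹) '' Set.Ioi (0 : ℝ) = Set.Ioi 0 := by
    ext x
    exact ⟨by rintro ⟨t, ht, rfl⟩; exact Set.mem_Ioi.2 (inv_pos.2 (Set.mem_Ioi.1 ht)),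
      fun hx => ⟨x⁻¹, Set.mem_Ioi.2 (inv_pos.2 (Set.mem_Ioi.1 hx)), inv_inv x⟩⟩
  have h := lintegral_image_eq_lintegral_abs_deriv_mul (s := Set.Ioi (0 : ℝ))
    (f := fun t => t⁻¹) (f' := fun t => -(t ^ 2)⁻¹) measurableSet_Ioi
    (fun t ht => (hasDerivAt_inv (ne_of_gt ht)).hasDerivWithinAt)
    inv_injective.injOn f
  rw [himage] at h
  simpa [abs_of_nonneg, sq_nonneg] using h

theorem lintegral_pi_eq_smul {N : ℕ} {θ : ℝ} (hθ : 0 < θ) (f : (Fin N → ℝ) → ℝ≥0∞) :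
    ∫⁻ z, f z = ENNReal.ofReal (θ ^ N) * ∫⁻ y, f (θ • y) := by
  have h := Measure.map_addHaar_smul (volume : Measure (Fin N → ℝ)) hθ.ne'
  have h2 : ∫⁻ y, f (θ • y) = ∫⁻ z, f z ∂(Measure.map (θ • ·) volume) :=
    (lintegral_map_equiv f (Homeomorph.smulOfNeZero θ hθ.ne').toMeasurableEquiv).symm
  rw [h2, h, lintegral_smul_measure, Module.finrank_fin_fun, smul_eq_mul, ← mul_assoc,
    ← ENNReal.ofReal_mul (by positivity), abs_of_pos (by positivity),
    mul_inv_cancel₀ (by positivity), ENNReal.ofReal_one, one_mul]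

theorem pxdaConst_smul {N : ℕ} (p : (Fin N → ℝ) → ℝ) {θ : ℝ} (hθ : 0 < θ) (y : Fin N → ℝ) :
    pxdaConst N p (θ • y) = ENNReal.ofReal (θ ^ (-(N : ℝ))) * pxdaConst N p y := by
  unfold pxdaConst
  rw [lintegral_Ioi_eq_mul_left hθ, ← lintegral_const_mul' _ _ ENNReal.ofReal_ne_top,
    ← lintegral_const_mul' _ _ ENNReal.ofReal_ne_top]
  refine setLIntegral_congr_fun measurableSet_Ioi fun t ht => ?_
  have ht : 0 < t := ht
  have hdiv : (fun i => (θ • y) i / (θ * t)) = fun i => y i / t := by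
    ext i
    simp only [Pi.smul_apply, smul_eq_mul]
    exact mul_div_mul_left _ _ hθ.ne'
  have hpow : θ ^ (-(N : ℝ)) = θ * θ ^ (-(N : ℝ) - 1) := by
    rw [Real.rpow_sub_one hθ.ne', mul_div_cancel₀ _ hθ.ne']
  simp only [hdiv]
  rw [← ENNReal.ofReal_mul hθ.le, ← ENNReal.ofReal_mul (by positivity),
    Real.mul_rpow hθ.le ht.le, hpow]
  congr 1
  ring

theorem lintegral_comp_smul_eq_pxdaConst {N : ℕ} (p : (Fin N → ℝ) → ℝ) (y : Fin N → ℝ) :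
    ∫⁻ θ in Set.Ioi (0 : ℝ), ENNReal.ofReal (p (θ • y) * θ ^ ((N : ℝ) - 1)) =
      pxdaConst N p y := by
  unfold pxdaConst
  rw [lintegral_Ioi_eq_inv]
  refine setLIntegral_congr_fun measurableSet_Ioi fun t ht => ?_
  have ht : 0 < t := ht
  have hsmul : t⁻¹ • y = fun i => y i / t := by
    ext i
    simp [div_eq_inv_mul]
  have hpow : t ^ (-(N : ℝ) - 1) = (t ^ 2)⁻¹ * t⁻¹ ^ ((N : ℝ) - 1) := by
    rw [Real.inv_rpow ht.le, ← Real.rpow_neg ht.le, ← Real.rpow_natCast, ← Real.rpow_neg ht.le,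
      ← Real.rpow_add ht]
    congr 1
    push_cast
    ring
  simp only [hsmul]
  rw [← ENNReal.ofReal_mul (by positivity), hpow]
  congr 1
  ring

theorem measurable_pxdaConst {N : ℕ} {p : (Fin N → ℝ) → ℝ} (hp : Measurable p) :
    Measurable (pxdaConst N p) := by
  unfold pxdaConst
  refine Measurable.lintegral_prod_right' (f := fun x : (Fin N → ℝ) × ℝ =>
    ENNReal.ofReal (p (fun i => x.1 i / x.2) * x.2 ^ (-(N : ℝ) - 1))) ?_
  fun_prop

/-- The integrand of the scale move after the substitution `z = θ y`. -/
theorem pxda_integrand_smul {N : ℕ} {p : (Fin N → ℝ) → ℝ} (hp : ∀ z, 0 ≤ p z) (w : ℝ≥0∞)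
    {θ : ℝ} (hθ : 0 < θ) (y : Fin N → ℝ) :
    ENNReal.ofReal (θ ^ N) * (ENNReal.ofReal (p (θ • y)) * (pxdaConst N p (θ • y))⁻¹ *
        (w * ENNReal.ofReal (p y * θ ^ (-(N : ℝ) - 1)))) =
      w * ENNReal.ofReal (p y) * (pxdaConst N p y)⁻¹ *
        ENNReal.ofReal (p (θ • y) * θ ^ ((N : ℝ) - 1)) := by
  have hinv : (pxdaConst N p (θ • y))⁻¹ = ENNReal.ofReal (θ ^ N) * (pxdaConst N p y)⁻¹ := by
    have hpos : 0 < θ ^ (-(N : ℝ)) := by positivity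
    rw [pxdaConst_smul p hθ, ENNReal.mul_inv (Or.inl (ENNReal.ofReal_pos.2 hpos).ne')
      (Or.inl ENNReal.ofReal_ne_top), ← ENNReal.ofReal_inv_of_pos hpos, Real.rpow_neg hθ.le,
      inv_inv, Real.rpow_natCast]
  have hpow : θ ^ ((N : ℝ) - 1) = θ ^ N * θ ^ N * θ ^ (-(N : ℝ) - 1) := by
    rw [← Real.rpow_natCast, ← Real.rpow_add hθ, ← Real.rpow_add hθ]
    congr 1
    ring
  rw [hinv, hpow, ENNReal.ofReal_mul (hp _), ENNReal.ofReal_mul (hp _),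
    ENNReal.ofReal_mul (by positivity), ENNReal.ofReal_mul (by positivity)]
  ring

/-- Let `p : ℝᴺ → [0,∞)` be a probability density w.r.t. Lebesgue measure
such that for a.e. `z` the normalizing constant `c(z) = ∫₀^∞ p(z/θ) θ^{−N−1} dθ` satisfies
`0 < c(z) < ∞`. Then the Markov transition that, from `z`, draws `θ ∈ (0,∞)` with density
`θ ↦ p(z/θ) θ^{−N−1}/c(z)` and moves to `z/θ` leaves `p` invariant: for every measurable
`A ⊆ ℝᴺ`,
`∫ p(z) (1/c(z)) ∫₀^∞ 1_A(z/θ) p(z/θ) θ^{−N−1} dθ dz = ∫_A p(y) dy`. -/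
theorem pxda_scale_move_invariance (N : ℕ) (hN : 1 ≤ N)
    (p : (Fin N → ℝ) → ℝ) (hpmeas : Measurable p) (hpnonneg : ∀ z, 0 ≤ p z)
    (hpprob : ∫ z, p z = 1)
    (hc : ∀ᵐ z : Fin N → ℝ, 0 < pxdaConst N p z ∧ pxdaConst N p z < ∞)
    (A : Set (Fin N → ℝ)) (hA : MeasurableSet A) :
    ∫⁻ z : Fin N → ℝ,
        ENNReal.ofReal (p z) * (pxdaConst N p z)⁻¹ *
          ∫⁻ θ in Set.Ioi (0 : ℝ),
            A.indicator (fun _ => (1 : ℝ≥0∞)) (fun i => z i / θ) *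
              ENNReal.ofReal (p (fun i => z i / θ) * θ ^ (-(N : ℝ) - 1)) =
      ∫⁻ y in A, ENNReal.ofReal (p y) := by
  have hcmeas := measurable_pxdaConst hpmeas
  set w : (Fin N → ℝ) → ℝ≥0∞ := A.indicator (fun _ => (1 : ℝ≥0∞)) with hw
  have hwmeas : Measurable w := measurable_const.indicator hA
  have hθmeas : ∀ z : Fin N → ℝ, Measurable fun θ : ℝ =>
      w (fun i => z i / θ) * ENNReal.ofReal (p (fun i => z i / θ) * θ ^ (-(N : ℝ) - 1)) := by
    intro z
    fun_prop
  calc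
    _ = ∫⁻ z : Fin N → ℝ, ∫⁻ θ in Set.Ioi (0 : ℝ),
          ENNReal.ofReal (p z) * (pxdaConst N p z)⁻¹ * (w (fun i => z i / θ) *
            ENNReal.ofReal (p (fun i => z i / θ) * θ ^ (-(N : ℝ) - 1))) :=
      lintegral_congr fun z => (lintegral_const_mul _ (hθmeas z)).symm
    _ = ∫⁻ θ in Set.Ioi (0 : ℝ), ∫⁻ z : Fin N → ℝ,
          ENNReal.ofReal (p z) * (pxdaConst N p z)⁻¹ * (w (fun i => z i / θ) *
            ENNReal.ofReal (p (fun i => z i / θ) * θ ^ (-(N : ℝ) - 1))) :=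
      lintegral_lintegral_swap (by unfold Function.uncurry; fun_prop)
    _ = ∫⁻ θ in Set.Ioi (0 : ℝ), ∫⁻ y : Fin N → ℝ,
          w y * ENNReal.ofReal (p y) * (pxdaConst N p y)⁻¹ *
            ENNReal.ofReal (p (θ • y) * θ ^ ((N : ℝ) - 1)) := by
      refine setLIntegral_congr_fun measurableSet_Ioi fun θ hθ => ?_
      have hθ : 0 < θ := hθ
      rw [lintegral_pi_eq_smul hθ, ← lintegral_const_mul' _ _ ENNReal.ofReal_ne_top]
      refine lintegral_congr fun y => ?_
      have hdiv : (fun i => (θ • y) i / θ) = y := by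
        ext i
        simp [hθ.ne']
      rw [hdiv, pxda_integrand_smul hpnonneg (w y) hθ y]
    _ = ∫⁻ y : Fin N → ℝ, ∫⁻ θ in Set.Ioi (0 : ℝ),
          w y * ENNReal.ofReal (p y) * (pxdaConst N p y)⁻¹ *
            ENNReal.ofReal (p (θ • y) * θ ^ ((N : ℝ) - 1)) :=
      lintegral_lintegral_swap (by unfold Function.uncurry; fun_prop)
    _ = ∫⁻ y : Fin N → ℝ, A.indicator (fun y => ENNReal.ofReal (p y)) y := by
      refine lintegral_congr_ae (hc.mono fun y hy => ?_)
      simp only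
      rw [lintegral_const_mul _ (by fun_prop), lintegral_comp_smul_eq_pxdaConst, mul_assoc,
        ENNReal.inv_mul_cancel hy.1.ne' hy.2.ne, mul_one, hw]
      by_cases hyA : y ∈ A <;> simp [hyA]
    _ = ∫⁻ y in A, ENNReal.ofReal (p y) := lintegral_indicator hA _
end
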